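/- arXiv:2211.11241 — 2 statements merged into one kernel-verified Lean document; each statement's English description precedes it below -/
import Mathlib

section
/- Let t = p/q ∈ (0,1) with p, q coprime positive integers, p < q. Then C_t has no exact overlaps if and only if there exists a positive integer ℓ such that the polynomial 1 + X^{2^{2ℓ-1}} divides the polynomial 1 + X^{3p} + X^{3q} + X^{3p+3q} in ℤ[X]. -/
open Filter Topology Polynomial

/-- The digit set `Ω_t = {0, 3t, 3, 3t+3}`. -/
def Omega (t : ℝ) : Set ℝ := {0, 3*t, 3, 3*t+3}

/-- `C_t` has an exact overlap: two distinct finite digit sequences of the same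
length `k ≥ 1` with equal weighted sums. -/
def HasExactOverlap (t : ℝ) : Prop :=
  ∃ k : ℕ, 0 < k ∧ ∃ c d : Fin k → ℝ,
    (∀ n, c n ∈ Omega t) ∧ (∀ n, d n ∈ Omega t) ∧ c ≠ d ∧
    ∑ n : Fin k, c n / 4^((n : ℕ)+1) = ∑ n : Fin k, d n / 4^((n : ℕ)+1)

/-!
Let `M(s) = ∑_{i ∈ s} 4^i`. After clearing denominators, an exact overlap of `C_{p/q}` is a
collision of the map `(s, u) ↦ p M(s) + q M(u)` on pairs of finite sets, and both sides of the
theorem turn out to depend only on the parities of the 2-adic valuations of `p` and `q`.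

A difference of two distinct values of `M` has even 2-adic valuation, so a collision
`p (M(s) - M(s')) = q (M(u') - M(u))` forces `v₂(p) ≡ v₂(q) mod 2`.

Conversely, if the parities agree, then replacing `(p, q)` by `(2p, 2q)` if necessary makes `v₂(p)`
and `v₂(q)` even. The generating function of the `4^k` values with `s, u ⊆ {0, …, k-1}` is
`∏_{i<k} (1 + z^{p 4^i}) (1 + z^{q 4^i})`. At `z = exp(2πi/4^m)` with `1 ≤ m ≤ k` no factor
vanishes, and the product has modulus at least `c 4^k` with `c > 0` independent of `k` and `m`. If
the values were distinct, each residue class mod `4^k` would contain at most `p + q` of them, and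
Parseval on `ℤ/4^k` would give `k (c 4^k)² ≤ (p + q) (4^k)²`, which fails for large `k`.

On the polynomial side, `1 + X^{2^a}` is the minimal polynomial of a primitive `2^{a+1}`-th root of
unity `ζ`, and `ζ^n = -1` exactly when `v₂(n) = a`; so the divisibility says that `v₂(p)` or `v₂(q)`
is odd, which for coprime `p` and `q` means that the parities differ.
-/

section Cyclotomic

lemma pow_eq_neg_one_iff_padicValNat_eq {R : Type*} [CommRing R] [IsDomain R] [NeZero (2 : R)]
    {ζ : R} {a n : ℕ} (hζ : IsPrimitiveRoot ζ (2 ^ (a + 1))) (hn : n ≠ 0) :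
    ζ ^ n = -1 ↔ padicValNat 2 n = a := by
  have neg_one_ne_one : (-1 : R) ≠ 1 := fun h =>
    two_ne_zero (by linear_combination -h : (2 : R) = 0)
  have sq_eq_one_and_ne_one : ζ ^ n = -1 ↔ ζ ^ (2 * n) = 1 ∧ ζ ^ n ≠ 1 := by
    rw [mul_comm, pow_mul, sq_eq_one_iff]
    exact ⟨fun h => ⟨.inr h, h ▸ neg_one_ne_one⟩, fun h => h.1.resolve_left h.2⟩
  rw [sq_eq_one_and_ne_one, Ne, hζ.pow_eq_one_iff_dvd, hζ.pow_eq_one_iff_dvd, pow_succ',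
    Nat.mul_dvd_mul_iff_left two_pos, ← pow_succ', padicValNat_dvd_iff_le hn,
    padicValNat_dvd_iff_le hn]
  lia

lemma cyclotomic_two_pow_succ (R : Type*) [CommRing R] (a : ℕ) :
    cyclotomic (2 ^ (a + 1)) R = 1 + X ^ 2 ^ a := by
  rw [cyclotomic_prime_pow_eq_geom_sum Nat.prime_two, Finset.sum_range_succ, Finset.sum_range_one,
    pow_zero, pow_one]

lemma one_add_X_pow_two_pow_dvd_iff {K : Type*} [Field K] [CharZero K] {ζ : K} {a : ℕ}
    (hζ : IsPrimitiveRoot ζ (2 ^ (a + 1))) (f : ℤ[X]) :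
    1 + X ^ 2 ^ a ∣ f ↔ aeval ζ f = 0 := by
  have pos : 0 < 2 ^ (a + 1) := by positivity
  rw [← cyclotomic_two_pow_succ, cyclotomic_eq_minpoly hζ pos,
    minpoly.isIntegrallyClosed_dvd_iff (hζ.isIntegral pos)]

lemma one_add_X_pow_two_pow_dvd_mul_iff {m n : ℕ} (hm : m ≠ 0) (hn : n ≠ 0) (a : ℕ) :
    (1 + X ^ 2 ^ a : ℤ[X]) ∣ (1 + X ^ m) * (1 + X ^ n) ↔
      padicValNat 2 m = a ∨ padicValNat 2 n = a := by
  have hζ := Complex.isPrimitiveRoot_exp (2 ^ (a + 1)) (by positivity)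
  rw [one_add_X_pow_two_pow_dvd_iff hζ, ← pow_eq_neg_one_iff_padicValNat_eq hζ hm,
    ← pow_eq_neg_one_iff_padicValNat_eq hζ hn]
  simp only [map_mul, map_add, map_one, map_pow, aeval_X, mul_eq_zero, add_comm (1 : ℂ),
    add_eq_zero_iff_eq_neg]

lemma padicValNat_two_three_mul (n : ℕ) : padicValNat 2 (3 * n) = padicValNat 2 n := by
  rcases eq_or_ne n 0 with rfl | hn
  · rw [mul_zero]
  · rw [padicValNat.mul three_ne_zero hn, padicValNat.eq_zero_of_not_dvd (by norm_num), zero_add]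

lemma exists_one_add_X_pow_dvd_iff {p q : ℕ} (hp : p ≠ 0) (hq : q ≠ 0) :
    (∃ l : ℕ, 0 < l ∧ ((1 + X ^ (2 ^ (2 * l - 1)) : ℤ[X]) ∣
      1 + X ^ (3 * p) + X ^ (3 * q) + X ^ (3 * p + 3 * q))) ↔
      Odd (padicValNat 2 p) ∨ Odd (padicValNat 2 q) := by
  have factorization : (1 + X ^ (3 * p) + X ^ (3 * q) + X ^ (3 * p + 3 * q) : ℤ[X]) =
      (1 + X ^ (3 * p)) * (1 + X ^ (3 * q)) := by ring
  have odd_iff (n : ℕ) : Odd n ↔ ∃ l, 0 < l ∧ n = 2 * l - 1 :=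
    ⟨fun ⟨m, hm⟩ => ⟨m + 1, by lia⟩, fun ⟨l, hl, hn⟩ => ⟨l - 1, by lia⟩⟩
  simp only [factorization, one_add_X_pow_two_pow_dvd_mul_iff (mul_ne_zero three_ne_zero hp)
    (mul_ne_zero three_ne_zero hq), padicValNat_two_three_mul, odd_iff, and_or_left, exists_or]

end Cyclotomic

section Digits

/-- The Moser–de Bruijn number of `s`: the natural number whose base-`4` digits are `1` at the
positions in `s` and `0` elsewhere. -/
def moserDeBruijn (s : Finset ℕ) : ℕ := ∑ i ∈ s, 4 ^ i

lemma moserDeBruijn_injective : Function.Injective moserDeBruijn :=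
  Finset.geomSum_injective (by norm_num)

lemma moserDeBruijn_lt {s : Finset ℕ} {k : ℕ} (hs : s ⊆ Finset.range k) :
    moserDeBruijn s < 4 ^ k :=
  Nat.geomSum_lt (by norm_num) fun _ hi => Finset.mem_range.mp (hs hi)

/-- The integer `p M(s) + q M(u)` attached to a pair `(s, u)` of digit sets, where `M` is
`moserDeBruijn`; it is a finite sum of base-`4` digits from `{0, p, q, p + q}`. -/
def pairSum (p q : ℕ) (x : Finset ℕ × Finset ℕ) : ℕ :=
  p * moserDeBruijn x.1 + q * moserDeBruijn x.2

/-- The `n`-th digit in `Ω_t` encoded by a pair `(s, u)`: membership of `n` in `s` contributes `3t`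
and membership in `u` contributes `3`. -/
noncomputable def cornerDigit (t : ℝ) (x : Finset ℕ × Finset ℕ) (n : ℕ) : ℝ :=
  3 * (t * (if n ∈ x.1 then 1 else 0) + if n ∈ x.2 then 1 else 0)

variable {t : ℝ} {k : ℕ}

lemma cornerDigit_mem_Omega (x : Finset ℕ × Finset ℕ) (n : ℕ) : cornerDigit t x n ∈ Omega t := by
  simp only [cornerDigit, Omega, Set.mem_insert_iff, Set.mem_singleton_iff]
  split_ifs <;> simp [mul_add]

lemma cornerDigit_eq_cornerDigit_iff (h0 : t ≠ 0) (h1 : t ≠ 1) (h1' : t ≠ -1)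
    {x y : Finset ℕ × Finset ℕ} {n : ℕ} :
    cornerDigit t x n = cornerDigit t y n ↔ (n ∈ x.1 ↔ n ∈ y.1) ∧ (n ∈ x.2 ↔ n ∈ y.2) := by
  simp only [cornerDigit]
  grind

lemma exists_cornerDigit_eq {c : Fin k → ℝ} (hc : ∀ n, c n ∈ Omega t) :
    ∃ x, x.1 ⊆ Finset.range k ∧ x.2 ⊆ Finset.range k ∧ ∀ n : Fin k, c n = cornerDigit t x n := by
  classical
  have bits (n : Fin k) :
      ∃ a b : Prop, c n = 3 * (t * (if a then 1 else 0) + if b then 1 else 0) := by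
    rcases hc n with h | h | h | (h : c n = 3 * t + 3)
    exacts [⟨False, False, by simp [h]⟩, ⟨True, False, by simp [h]⟩, ⟨False, True, by simp [h]⟩,
      ⟨True, True, by simp [h, mul_add]⟩]
  choose a b hab using bits
  refine ⟨({n ∈ Finset.range k | ∃ h : n < k, a ⟨n, h⟩},
      {n ∈ Finset.range k | ∃ h : n < k, b ⟨n, h⟩}),
    Finset.filter_subset _ _, Finset.filter_subset _ _, fun n => ?_⟩
  simp [hab n, cornerDigit]

lemma sum_cornerDigit_mul_four_pow {x : Finset ℕ × Finset ℕ} (h1 : x.1 ⊆ Finset.range k)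
    (h2 : x.2 ⊆ Finset.range k) :
    ∑ n : Fin k, cornerDigit t x n * 4 ^ (n : ℕ) =
      3 * (t * moserDeBruijn x.1 + moserDeBruijn x.2) := by
  have sum_indicator {s : Finset ℕ} (hs : s ⊆ Finset.range k) :
      ∑ n ∈ Finset.range k, (if n ∈ s then 1 else 0) * (4 : ℝ) ^ n = moserDeBruijn s := by
    simp [moserDeBruijn, ite_mul, Finset.sum_ite_mem, Finset.inter_eq_right.mpr hs]
  rw [Fin.sum_univ_eq_sum_range fun n => cornerDigit t x n * (4 : ℝ) ^ n, ← sum_indicator h1,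
    ← sum_indicator h2, Finset.mul_sum, ← Finset.sum_add_distrib, Finset.mul_sum]
  exact Finset.sum_congr rfl fun n _ => by rw [cornerDigit]; ring

lemma four_pow_mul_sum_div (c : Fin k → ℝ) :
    4 ^ k * ∑ n : Fin k, c n / 4 ^ ((n : ℕ) + 1) = ∑ n : Fin k, c n.rev * 4 ^ (n : ℕ) := by
  rw [Finset.mul_sum, ← Equiv.sum_comp Fin.revPerm]
  refine Finset.sum_congr rfl fun n _ => ?_
  have exponent : (n.rev : ℕ) + 1 + n = k := by rw [Fin.val_rev]; lia
  rw [Fin.revPerm_apply, mul_div_left_comm]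
  congr 1
  rw [div_eq_iff (by positivity), ← pow_add, add_comm, exponent]

lemma hasExactOverlap_iff_exists_sum_mul_four_pow :
    HasExactOverlap t ↔ ∃ k : ℕ, ∃ c d : Fin k → ℝ, (∀ n, c n ∈ Omega t) ∧ (∀ n, d n ∈ Omega t) ∧
      c ≠ d ∧ ∑ n : Fin k, c n * 4 ^ (n : ℕ) = ∑ n : Fin k, d n * 4 ^ (n : ℕ) := by
  have four_pow_ne_zero (k : ℕ) : (4 : ℝ) ^ k ≠ 0 := by positivity
  constructor
  · rintro ⟨k, -, c, d, hc, hd, hne, hsum⟩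
    refine ⟨k, c ∘ Fin.rev, d ∘ Fin.rev, fun n => hc _, fun n => hd _,
      Fin.rev_surjective.injective_comp_right.ne hne, ?_⟩
    simp only [Function.comp_apply, ← four_pow_mul_sum_div, hsum]
  · rintro ⟨k, c, d, hc, hd, hne, hsum⟩
    obtain ⟨n, -⟩ := Function.ne_iff.mp hne
    refine ⟨k, n.pos, c ∘ Fin.rev, d ∘ Fin.rev, fun n => hc _, fun n => hd _,
      Fin.rev_surjective.injective_comp_right.ne hne, mul_left_cancel₀ (four_pow_ne_zero k) ?_⟩
    simpa only [four_pow_mul_sum_div, Function.comp_apply, Fin.rev_rev] using hsum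

theorem hasExactOverlap_iff_not_injective (h0 : t ≠ 0) (h1 : t ≠ 1) (h1' : t ≠ -1) :
    HasExactOverlap t ↔ ¬ Function.Injective
      fun x : Finset ℕ × Finset ℕ => t * moserDeBruijn x.1 + moserDeBruijn x.2 := by
  rw [hasExactOverlap_iff_exists_sum_mul_four_pow, Function.not_injective_iff]
  constructor
  · rintro ⟨k, c, d, hc, hd, hne, hsum⟩
    obtain ⟨x, hx1, hx2, hcx⟩ := exists_cornerDigit_eq hc
    obtain ⟨y, hy1, hy2, hdy⟩ := exists_cornerDigit_eq hd
    refine ⟨x, y, ?_, fun hxy => hne (funext fun n => by rw [hcx, hdy, hxy])⟩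
    simp only [hcx, hdy, sum_cornerDigit_mul_four_pow hx1 hx2,
      sum_cornerDigit_mul_four_pow hy1 hy2] at hsum
    exact mul_left_cancel₀ three_ne_zero hsum
  · rintro ⟨x, y, hsum, hne⟩
    obtain ⟨k, hk⟩ := (x.1 ∪ x.2 ∪ (y.1 ∪ y.2)).exists_nat_subset_range
    simp only [Finset.union_subset_iff] at hk
    obtain ⟨⟨hx1, hx2⟩, hy1, hy2⟩ := hk
    refine ⟨k, fun n => cornerDigit t x n, fun n => cornerDigit t y n,
      fun n => cornerDigit_mem_Omega x n, fun n => cornerDigit_mem_Omega y n, fun heq => hne ?_, ?_⟩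
    · have mem_iff (n : ℕ) (hn : n < k) := (cornerDigit_eq_cornerDigit_iff h0 h1 h1').mp
        (congrFun heq ⟨n, hn⟩)
      ext n <;> grind
    · rw [sum_cornerDigit_mul_four_pow hx1 hx2, sum_cornerDigit_mul_four_pow hy1 hy2, hsum]

theorem hasExactOverlap_div_iff_not_injective {p q : ℕ} (hp : p ≠ 0) (hq : q ≠ 0) (hpq : p ≠ q) :
    HasExactOverlap ((p : ℝ) / q) ↔ ¬ Function.Injective (pairSum p q) := by
  have hq' : (q : ℝ) ≠ 0 := Nat.cast_ne_zero.mpr hq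
  have h0 : (p : ℝ) / q ≠ 0 := div_ne_zero (Nat.cast_ne_zero.mpr hp) hq'
  have h1 : (p : ℝ) / q ≠ 1 := by rwa [Ne, div_eq_one_iff_eq hq', Nat.cast_inj]
  have h1' : (p : ℝ) / q ≠ -1 := (neg_one_lt_zero.trans_le (by positivity)).ne'
  have scale (x : Finset ℕ × Finset ℕ) : (pairSum p q x : ℝ) =
      q * (p / q * moserDeBruijn x.1 + moserDeBruijn x.2) := by
    rw [pairSum]; push_cast; field_simp
  have eq_iff (x y : Finset ℕ × Finset ℕ) : pairSum p q x = pairSum p q y ↔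
      (p / q * moserDeBruijn x.1 + moserDeBruijn x.2 : ℝ) =
        p / q * moserDeBruijn y.1 + moserDeBruijn y.2 := by
    rw [← Nat.cast_inj (R := ℝ), scale, scale, mul_right_inj' hq']
  simp only [hasExactOverlap_iff_not_injective h0 h1 h1', Function.Injective, eq_iff]

end Digits

section Valuation

lemma exists_odd_sum_mul_four_pow_eq {s : Finset ℕ} (hs : s.Nonempty) {e : ℕ → ℤ}
    (he : ∀ i ∈ s, Odd (e i)) :
    ∃ m, Odd m ∧ ∑ i ∈ s, e i * 4 ^ i = 4 ^ s.min' hs * m := by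
  set j := s.min' hs
  have hj : j ∈ s := s.min'_mem hs
  have higher_terms : 4 ^ (j + 1) ∣ ∑ i ∈ s.erase j, e i * 4 ^ i :=
    Finset.dvd_sum fun i hi => dvd_mul_of_dvd_right
      (pow_dvd_pow 4 (s.min'_lt_of_mem_erase_min' hs hi)) _
  obtain ⟨r, hr⟩ := higher_terms
  refine ⟨e j + 4 * r, (he j hj).add_even (even_iff_two_dvd.mpr ⟨2 * r, by ring⟩), ?_⟩
  rw [← Finset.add_sum_erase s _ hj, hr]
  ring

lemma padicValInt_two_four_pow_mul {m : ℤ} (hm : Odd m) (j : ℕ) :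
    padicValInt 2 (4 ^ j * m) = 2 * j := by
  have hm0 : m ≠ 0 := by rintro rfl; simp at hm
  have hm2 : ¬ ((2 : ℕ) : ℤ) ∣ m := by
    rwa [Nat.cast_ofNat, ← even_iff_two_dvd, Int.not_even_iff_odd]
  rw [padicValInt.mul (by positivity) hm0, padicValInt.eq_zero_of_not_dvd hm2, add_zero,
    show (4 : ℤ) ^ j = ((2 ^ (2 * j) : ℕ) : ℤ) by rw [pow_mul]; norm_num, padicValInt.of_nat,
    padicValNat.prime_pow]

lemma moserDeBruijn_sub_eq_sum (s u : Finset ℕ) :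
    (moserDeBruijn s - moserDeBruijn u : ℤ) =
      ∑ i ∈ symmDiff s u, (if i ∈ s then 1 else -1) * 4 ^ i := by
  have on_left : ∑ i ∈ s \ u, (if i ∈ s then 1 else -1) * (4 : ℤ) ^ i = ∑ i ∈ s \ u, 4 ^ i :=
    Finset.sum_congr rfl fun i hi => by rw [if_pos (Finset.mem_sdiff.mp hi).1, one_mul]
  have on_right : ∑ i ∈ u \ s, (if i ∈ s then 1 else -1) * (4 : ℤ) ^ i = -∑ i ∈ u \ s, 4 ^ i := by
    rw [← Finset.sum_neg_distrib]
    exact Finset.sum_congr rfl fun i hi => by rw [if_neg (Finset.mem_sdiff.mp hi).2, neg_one_mul]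
  rw [symmDiff_def, Finset.sup_eq_union, Finset.sum_union disjoint_sdiff_sdiff, on_left, on_right,
    ← sub_eq_add_neg, Finset.sum_sdiff_sub_sum_sdiff]
  simp [moserDeBruijn]

lemma even_padicValInt_moserDeBruijn_sub (s u : Finset ℕ) :
    Even (padicValInt 2 (moserDeBruijn s - moserDeBruijn u)) := by
  rcases eq_or_ne s u with rfl | hsu
  · simp
  · have digit_odd (i : ℕ) (_ : i ∈ symmDiff s u) : Odd (if i ∈ s then 1 else -1 : ℤ) := by
      split_ifs <;> decide
    obtain ⟨m, hm, hsum⟩ :=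
      exists_odd_sum_mul_four_pow_eq (Finset.symmDiff_nonempty.mpr hsu) digit_odd
    rw [moserDeBruijn_sub_eq_sum, hsum, padicValInt_two_four_pow_mul hm]
    exact even_two_mul _

theorem pairSum_injective_of_odd_add {p q : ℕ} (hp : p ≠ 0) (hq : q ≠ 0)
    (hodd : Odd (padicValNat 2 p + padicValNat 2 q)) : Function.Injective (pairSum p q) := by
  rintro ⟨s, u⟩ ⟨s', u'⟩ h
  simp only [pairSum] at h
  by_cases hs : s = s'
  · subst hs
    have hu : u = u' := moserDeBruijn_injective (mul_left_cancel₀ hq (Nat.add_left_cancel h))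
    rw [hu]
  exfalso
  have difference : (p * (moserDeBruijn s - moserDeBruijn s') : ℤ) =
      q * (moserDeBruijn u' - moserDeBruijn u) := by
    zify at h
    linear_combination h
  have hp' : (p : ℤ) ≠ 0 := Nat.cast_ne_zero.mpr hp
  have hq' : (q : ℤ) ≠ 0 := Nat.cast_ne_zero.mpr hq
  have hs0 : (moserDeBruijn s - moserDeBruijn s' : ℤ) ≠ 0 :=
    sub_ne_zero.mpr (Nat.cast_injective.ne (moserDeBruijn_injective.ne hs))
  have hu0 : (moserDeBruijn u' - moserDeBruijn u : ℤ) ≠ 0 :=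
    right_ne_zero_of_mul (difference ▸ mul_ne_zero hp' hs0)
  have valuations := congrArg (padicValInt 2) difference
  rw [padicValInt.mul hp' hs0, padicValInt.mul hq' hu0, padicValInt.of_nat,
    padicValInt.of_nat] at valuations
  have hes := even_padicValInt_moserDeBruijn_sub s s'
  have heu := even_padicValInt_moserDeBruijn_sub u' u
  grind

end Valuation

section Product

lemma exists_pos_le_prod_of_summable_one_sub {ι : Type*} {a : ι → ℝ} (hpos : ∀ i, 0 < a i)
    (hle : ∀ i, a i ≤ 1) (hsum : Summable fun i => 1 - a i) :
    ∃ c > 0, ∀ s : Finset ι, c ≤ ∏ i ∈ s, a i := by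
  have hsum' : Summable fun i => a i - 1 := by simpa only [neg_sub] using hsum.neg
  have one_add (i : ι) : 1 + (a i - 1) = a i := add_sub_cancel 1 (a i)
  have multipliable : Multipliable a := by
    simpa only [one_add] using Real.multipliable_one_add_of_summable hsum'
  have tprod_ne_zero : ∏' i, a i ≠ 0 := by
    simpa only [one_add] using tprod_one_add_ne_zero_of_summable
      (fun i => (one_add i).trans_ne (hpos i).ne') hsum'.norm
  have antitone : Antitone fun s : Finset ι => ∏ i ∈ s, a i := fun s u hsu => by
    classical
    change ∏ i ∈ u, a i ≤ ∏ i ∈ s, a i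
    rw [← Finset.prod_sdiff hsu]
    exact mul_le_of_le_one_left (Finset.prod_nonneg fun i _ => (hpos i).le)
      (Finset.prod_le_one (fun i _ => (hpos i).le) fun i _ => hle i)
  have tprod_le (s : Finset ι) : ∏' i, a i ≤ ∏ i ∈ s, a i :=
    antitone.le_of_tendsto multipliable.hasProd s
  have tprod_nonneg : 0 ≤ ∏' i, a i :=
    ge_of_tendsto' multipliable.hasProd fun s => Finset.prod_nonneg fun i _ => (hpos i).le
  exact ⟨∏' i, a i, tprod_nonneg.lt_of_ne' tprod_ne_zero, tprod_le⟩

/-- The primitive `4^m`-th root of unity `exp (2πi / 4^m)`. -/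
noncomputable def fourPowRoot (m : ℕ) : ℂ := Complex.exp (2 * Real.pi * Complex.I / (4 ^ m : ℕ))

lemma isPrimitiveRoot_fourPowRoot (m : ℕ) : IsPrimitiveRoot (fourPowRoot m) (4 ^ m) :=
  Complex.isPrimitiveRoot_exp _ (by positivity)

lemma norm_fourPowRoot (m : ℕ) : ‖fourPowRoot m‖ = 1 :=
  (isPrimitiveRoot_fourPowRoot m).norm'_eq_one (by positivity)

lemma fourPowRoot_zero : fourPowRoot 0 = 1 := by
  simpa using (isPrimitiveRoot_fourPowRoot 0).pow_eq_one

lemma fourPowRoot_pow_four_pow (m i : ℕ) : fourPowRoot m ^ 4 ^ i = fourPowRoot (m - i) := by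
  rcases le_total m i with hmi | him
  · rw [Nat.sub_eq_zero_of_le hmi, fourPowRoot_zero]
    exact ((isPrimitiveRoot_fourPowRoot m).pow_eq_one_iff_dvd _).mpr (pow_dvd_pow 4 hmi)
  · obtain ⟨d, rfl⟩ := Nat.exists_eq_add_of_le him
    rw [Nat.add_sub_cancel_left, fourPowRoot, fourPowRoot, ← Complex.exp_nat_mul]
    congr 1
    push_cast
    rw [pow_add]
    field_simp

lemma one_add_fourPowRoot_pow_ne_zero {p : ℕ} (hp : p ≠ 0) (hev : Even (padicValNat 2 p)) (m : ℕ) :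
    1 + fourPowRoot m ^ p ≠ 0 := by
  rcases m with _ | m
  · rw [fourPowRoot_zero, one_pow]
    norm_num
  · have order : (4 : ℕ) ^ (m + 1) = 2 ^ (2 * m + 1 + 1) := by
      rw [show 2 * m + 1 + 1 = 2 * (m + 1) by ring, pow_mul]; norm_num
    have hζ := order ▸ isPrimitiveRoot_fourPowRoot (m + 1)
    rw [Ne, add_comm, add_eq_zero_iff_eq_neg, pow_eq_neg_one_iff_padicValNat_eq hζ hp]
    exact fun h => Nat.not_even_two_mul_add_one m (h ▸ hev)

lemma norm_one_sub_fourPowRoot_le (m : ℕ) : ‖1 - fourPowRoot m‖ ≤ 2 * Real.pi * (1 / 4) ^ m := by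
  have argument : (2 * Real.pi * Complex.I / (4 ^ m : ℕ) : ℂ) =
      Complex.I * ((2 * Real.pi * (1 / 4) ^ m : ℝ) : ℂ) := by
    push_cast
    rw [one_div, inv_pow]
    ring
  rw [norm_sub_rev, fourPowRoot, argument]
  exact Real.norm_exp_I_mul_ofReal_sub_one_le.trans_eq (Real.norm_of_nonneg (by positivity))

lemma norm_one_sub_pow_le {z : ℂ} (hz : ‖z‖ ≤ 1) (n : ℕ) : ‖1 - z ^ n‖ ≤ n * ‖1 - z‖ := by
  rw [← mul_neg_geom_sum, norm_mul, mul_comm]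
  gcongr
  calc ‖∑ i ∈ Finset.range n, z ^ i‖ ≤ ∑ i ∈ Finset.range n, ‖z ^ i‖ := norm_sum_le _ _
    _ ≤ ∑ _i ∈ Finset.range n, 1 := by
      gcongr with i
      rw [norm_pow]
      exact pow_le_one₀ (norm_nonneg z) hz
    _ = n := by simp

lemma one_sub_norm_one_add_div_two_le (z : ℂ) : 1 - ‖1 + z‖ / 2 ≤ ‖1 - z‖ := by
  have two_le : ‖(1 + z) + (1 - z)‖ ≤ ‖1 + z‖ + ‖1 - z‖ := norm_add_le _ _
  rw [show (1 + z) + (1 - z) = 2 by ring, Complex.norm_ofNat] at two_le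
  linarith [norm_nonneg (1 - z)]

lemma norm_one_add_fourPowRoot_pow_div_two_le_one (m p : ℕ) :
    ‖1 + fourPowRoot m ^ p‖ / 2 ≤ 1 := by
  have norm_le : ‖1 + fourPowRoot m ^ p‖ ≤ 1 + 1 := by
    simpa [norm_fourPowRoot] using norm_add_le 1 (fourPowRoot m ^ p)
  linarith

lemma summable_one_sub_norm_one_add_fourPowRoot_pow (p : ℕ) :
    Summable fun m => 1 - ‖1 + fourPowRoot m ^ p‖ / 2 := by
  have geometric : Summable fun m : ℕ => p * (2 * Real.pi * (1 / 4 : ℝ) ^ m) :=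
    ((summable_geometric_of_lt_one (by norm_num) (by norm_num)).mul_left _).mul_left _
  refine geometric.of_nonneg_of_le
    (fun m => sub_nonneg.mpr (norm_one_add_fourPowRoot_pow_div_two_le_one m p)) fun m => ?_
  calc 1 - ‖1 + fourPowRoot m ^ p‖ / 2 ≤ ‖1 - fourPowRoot m ^ p‖ :=
        one_sub_norm_one_add_div_two_le _
    _ ≤ p * ‖1 - fourPowRoot m‖ := norm_one_sub_pow_le (norm_fourPowRoot m).le p
    _ ≤ p * (2 * Real.pi * (1 / 4) ^ m) := by gcongr; exact norm_one_sub_fourPowRoot_le m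

lemma exists_pos_mul_two_pow_le_norm_prod {p : ℕ} (hp : p ≠ 0) (hev : Even (padicValNat 2 p)) :
    ∃ c > 0, ∀ m k : ℕ, c * 2 ^ k ≤ ‖∏ i ∈ Finset.range k, (1 + fourPowRoot m ^ (p * 4 ^ i))‖ := by
  set a : ℕ → ℝ := fun m => ‖1 + fourPowRoot m ^ p‖ / 2 with ha
  obtain ⟨c, hc, hprod⟩ := exists_pos_le_prod_of_summable_one_sub
    (fun m => div_pos (norm_pos_iff.mpr (one_add_fourPowRoot_pow_ne_zero hp hev m)) two_pos)
    (fun m => norm_one_add_fourPowRoot_pow_div_two_le_one m p)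
    (summable_one_sub_norm_one_add_fourPowRoot_pow p)
  refine ⟨c, hc, fun m k => ?_⟩
  have a_zero : a 0 = 1 := by simp [ha, fourPowRoot_zero, one_add_one_eq_two]
  have factor (i : ℕ) : ‖1 + fourPowRoot m ^ (p * 4 ^ i)‖ = a (m - i) * 2 := by
    change _ = ‖1 + fourPowRoot (m - i) ^ p‖ / 2 * 2
    rw [← fourPowRoot_pow_four_pow, ← pow_mul, mul_comm p, div_mul_cancel₀ _ two_ne_zero]
  have trivial_factors : ∏ i ∈ Finset.range k with i < m, a (m - i) =
      ∏ i ∈ Finset.range k, a (m - i) := by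
    refine Finset.prod_filter_of_ne fun i _ hne => ?_
    contrapose! hne
    rw [Nat.sub_eq_zero_of_le hne, a_zero]
  have sub_injOn : Set.InjOn (m - ·) ({i ∈ Finset.range k | i < m} : Finset ℕ) := by
    intro i hi j hj hij
    simp only [Finset.coe_filter, Set.mem_ofPred_eq] at hi hj hij
    lia
  rw [norm_prod, Finset.prod_congr rfl fun i _ => factor i, Finset.prod_mul_distrib,
    Finset.prod_const, Finset.card_range, ← trivial_factors, ← Finset.prod_image sub_injOn]
  gcongr
  exact hprod _

end Product

section Parseval

theorem sum_norm_sq_sum_addChar_eq {R ι : Type*} [CommRing R] [Fintype R] [DecidableEq R]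
    {ψ : AddChar R ℂ} (hψ : ψ.IsPrimitive) (I : Finset ι) (g : ι → R) :
    ∑ r, ‖∑ x ∈ I, ψ (r * g x)‖ ^ 2 =
      Fintype.card R * ({z ∈ I ×ˢ I | g z.1 = g z.2}.card : ℝ) := by
  have expand (r : R) : ((‖∑ x ∈ I, ψ (r * g x)‖ ^ 2 : ℝ) : ℂ) =
      ∑ z ∈ I ×ˢ I, ψ (r * (g z.1 - g z.2)) := by
    rw [Complex.ofReal_pow, ← Complex.mul_conj', map_sum, Finset.sum_mul_sum, Finset.sum_product]
    refine Finset.sum_congr rfl fun x _ => Finset.sum_congr rfl fun y _ => ?_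
    rw [← AddChar.map_neg_eq_conj, ← AddChar.map_add_eq_mul, mul_sub, sub_eq_add_neg]
  apply Complex.ofReal_injective
  rw [Complex.ofReal_sum, Finset.sum_congr rfl fun r _ => expand r, Finset.sum_comm]
  simp only [AddChar.sum_mulShift _ hψ, sub_eq_zero]
  push_cast
  rw [← Finset.sum_filter, Finset.sum_const, nsmul_eq_mul, mul_comm]

lemma card_filter_natCast_eq_le {ι : Type*} {N M : ℕ} {I : Finset ι} {g : ι → ℕ}
    (hinj : Set.InjOn g I) (hlt : ∀ x ∈ I, g x < M * N) :
    {z ∈ I ×ˢ I | (g z.1 : ZMod N) = g z.2}.card ≤ I.card * M := by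
  rw [← Finset.card_range M, ← Finset.card_product]
  refine Finset.card_le_card_of_injOn (fun z => (z.1, g z.2 / N)) ?_ ?_
  · rintro ⟨x, y⟩ hz
    simp only [Finset.coe_filter, Finset.mem_product, Set.mem_ofPred_eq] at hz
    simp only [Finset.coe_product, Set.mem_prod, Finset.mem_coe, Finset.mem_range]
    exact ⟨hz.1.1, Nat.div_lt_of_lt_mul (mul_comm M N ▸ hlt y hz.1.2)⟩
  · rintro ⟨x, y⟩ hz ⟨x', y'⟩ hz' heq
    simp only [Finset.coe_filter, Finset.mem_product, Set.mem_ofPred_eq] at hz hz'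
    obtain ⟨rfl, quotients⟩ := Prod.mk.inj heq
    have residues : g y % N = g y' % N :=
      (ZMod.natCast_eq_natCast_iff' _ _ _).mp (hz.2.symm.trans hz'.2)
    have values : g y = g y' := by
      rw [← Nat.div_add_mod (g y) N, ← Nat.div_add_mod (g y') N, quotients, residues]
    rw [hinj hz.1.2 hz'.1.2 values]

end Parseval

section Collision

/-- The pairs of digit sets all of whose digits sit below position `k`. -/
def digitPairs (k : ℕ) : Finset (Finset ℕ × Finset ℕ) :=
  (Finset.range k).powerset ×ˢ (Finset.range k).powerset

lemma card_digitPairs (k : ℕ) : (digitPairs k).card = 4 ^ k := by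
  rw [digitPairs, Finset.card_product, Finset.card_powerset, Finset.card_range, ← mul_pow]
  norm_num

lemma pairSum_lt {p q k : ℕ} (hp : p ≠ 0) {x : Finset ℕ × Finset ℕ} (hx : x ∈ digitPairs k) :
    pairSum p q x < (p + q) * 4 ^ k := by
  simp only [digitPairs, Finset.mem_product, Finset.mem_powerset] at hx
  rw [pairSum, add_mul]
  exact add_lt_add_of_lt_of_le
    (Nat.mul_lt_mul_of_pos_left (moserDeBruijn_lt hx.1) (Nat.pos_of_ne_zero hp))
    (Nat.mul_le_mul_left q (moserDeBruijn_lt hx.2).le)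

lemma sum_pow_pairSum_eq_prod {R : Type*} [CommSemiring R] (p q k : ℕ) (z : R) :
    ∑ x ∈ digitPairs k, z ^ pairSum p q x =
      (∏ i ∈ Finset.range k, (1 + z ^ (p * 4 ^ i))) *
        ∏ i ∈ Finset.range k, (1 + z ^ (q * 4 ^ i)) := by
  have subset_expansion (n : ℕ) : ∏ i ∈ Finset.range k, (1 + z ^ (n * 4 ^ i)) =
      ∑ s ∈ (Finset.range k).powerset, z ^ (n * moserDeBruijn s) := by
    simp only [Finset.prod_one_add, Finset.prod_pow_eq_pow_sum, moserDeBruijn, Finset.mul_sum]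
  rw [subset_expansion, subset_expansion, Finset.sum_mul_sum, digitPairs, Finset.sum_product]
  simp only [pairSum, pow_add]

lemma stdAddChar_four_pow (k j : ℕ) :
    ZMod.stdAddChar (4 ^ j : ZMod (4 ^ k)) = fourPowRoot (k - j) := by
  have at_one : ZMod.stdAddChar (1 : ZMod (4 ^ k)) = fourPowRoot k := by
    simpa [fourPowRoot] using ZMod.stdAddChar_coe (N := 4 ^ k) 1
  rw [← fourPowRoot_pow_four_pow, ← at_one, ← AddChar.map_nsmul_eq_pow, nsmul_one]
  push_cast
  rfl

lemma four_pow_injOn_zmod (k : ℕ) :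
    Set.InjOn (fun j : ℕ => (4 ^ j : ZMod (4 ^ k))) (Finset.range k) := by
  intro i hi j hj hij
  have lt_modulus {n : ℕ} (hn : n ∈ (Finset.range k : Set ℕ)) : 4 ^ n < 4 ^ k :=
    Nat.pow_lt_pow_right (by norm_num) (Finset.mem_range.mp hn)
  have residues : ((4 ^ i : ℕ) : ZMod (4 ^ k)) = (4 ^ j : ℕ) := by push_cast; exact hij
  rw [ZMod.natCast_eq_natCast_iff', Nat.mod_eq_of_lt (lt_modulus hi),
    Nat.mod_eq_of_lt (lt_modulus hj)] at residues
  exact Nat.pow_right_injective (by norm_num) residues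

lemma sum_norm_sq_fourPowRoot_le_of_injective {p q : ℕ} (hp : p ≠ 0)
    (hinj : Function.Injective (pairSum p q)) (k : ℕ) :
    ∑ j ∈ Finset.range k, ‖∑ x ∈ digitPairs k, fourPowRoot (k - j) ^ pairSum p q x‖ ^ 2 ≤
      (p + q) * (4 ^ k) ^ 2 := by
  set F : ZMod (4 ^ k) → ℝ := fun r =>
    ‖∑ x ∈ digitPairs k, ZMod.stdAddChar (r * (pairSum p q x : ZMod (4 ^ k)))‖ ^ 2 with hF
  have value_at_four_pow (j : ℕ) :
      F (4 ^ j) = ‖∑ x ∈ digitPairs k, fourPowRoot (k - j) ^ pairSum p q x‖ ^ 2 := by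
    simp only [hF, mul_comm (4 ^ j : ZMod (4 ^ k)), ← nsmul_eq_mul, AddChar.map_nsmul_eq_pow,
      stdAddChar_four_pow]
  have collisions : {z ∈ digitPairs k ×ˢ digitPairs k |
      (pairSum p q z.1 : ZMod (4 ^ k)) = pairSum p q z.2}.card ≤ 4 ^ k * (p + q) :=
    (card_filter_natCast_eq_le hinj.injOn fun x hx => pairSum_lt hp hx).trans_eq
      (by rw [card_digitPairs])
  calc ∑ j ∈ Finset.range k, ‖∑ x ∈ digitPairs k, fourPowRoot (k - j) ^ pairSum p q x‖ ^ 2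
      = ∑ r ∈ (Finset.range k).image (4 ^ ·), F r := by
        rw [Finset.sum_image (four_pow_injOn_zmod k)]
        simp only [value_at_four_pow]
    _ ≤ ∑ r, F r := Finset.sum_le_univ_sum_of_nonneg fun r => by positivity
    _ = 4 ^ k * ({z ∈ digitPairs k ×ˢ digitPairs k |
          (pairSum p q z.1 : ZMod (4 ^ k)) = pairSum p q z.2}.card : ℝ) := by
        rw [hF, sum_norm_sq_sum_addChar_eq (ZMod.isPrimitive_stdAddChar _), ZMod.card]
        push_cast
        rfl
    _ ≤ 4 ^ k * (4 ^ k * (p + q)) := by gcongr; exact_mod_cast collisions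
    _ = (p + q) * (4 ^ k) ^ 2 := by ring

theorem not_injective_pairSum_of_even {p q : ℕ} (hp : p ≠ 0) (hq : q ≠ 0)
    (hp2 : Even (padicValNat 2 p)) (hq2 : Even (padicValNat 2 q)) :
    ¬ Function.Injective (pairSum p q) := by
  intro hinj
  obtain ⟨c, hc, hcp⟩ := exists_pos_mul_two_pow_le_norm_prod hp hp2
  obtain ⟨d, hd, hdq⟩ := exists_pos_mul_two_pow_le_norm_prod hq hq2
  obtain ⟨k, hk⟩ := exists_nat_gt ((p + q) / (c * d) ^ 2)
  have lower_bound (m : ℕ) : c * d * 4 ^ k ≤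
      ‖∑ x ∈ digitPairs k, fourPowRoot m ^ pairSum p q x‖ := by
    rw [sum_pow_pairSum_eq_prod, norm_mul]
    calc c * d * 4 ^ k = (c * 2 ^ k) * (d * 2 ^ k) := by
          rw [mul_mul_mul_comm, ← mul_pow]; norm_num
      _ ≤ _ := mul_le_mul (hcp m k) (hdq m k) (by positivity) (norm_nonneg _)
  have bound : k * (c * d) ^ 2 * (4 ^ k) ^ 2 ≤ (p + q) * (4 ^ k) ^ 2 :=
    calc k * (c * d) ^ 2 * (4 ^ k) ^ 2 = ∑ _j ∈ Finset.range k, (c * d * 4 ^ k) ^ 2 := by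
          rw [Finset.sum_const, Finset.card_range, nsmul_eq_mul, mul_pow (c * d), mul_assoc]
      _ ≤ ∑ j ∈ Finset.range k,
            ‖∑ x ∈ digitPairs k, fourPowRoot (k - j) ^ pairSum p q x‖ ^ 2 := by
          gcongr with j
          exact lower_bound (k - j)
      _ ≤ (p + q) * (4 ^ k) ^ 2 := sum_norm_sq_fourPowRoot_le_of_injective hp hinj k
  rw [div_lt_iff₀ (by positivity)] at hk
  exact hk.not_ge (le_of_mul_le_mul_right bound (by positivity))

end Collision

theorem hasExactOverlap_div_iff_even_padicValNat_add {p q : ℕ} (hp : p ≠ 0) (hq : q ≠ 0)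
    (hpq : p ≠ q) :
    HasExactOverlap ((p : ℝ) / q) ↔ Even (padicValNat 2 p + padicValNat 2 q) := by
  constructor
  · intro hoverlap
    by_contra hodd
    exact (hasExactOverlap_div_iff_not_injective hp hq hpq).mp hoverlap
      (pairSum_injective_of_odd_add hp hq (Nat.not_even_iff_odd.mp hodd))
  · intro heven
    rcases Nat.even_or_odd (padicValNat 2 p) with hp2 | hp2
    · exact (hasExactOverlap_div_iff_not_injective hp hq hpq).mpr
        (not_injective_pairSum_of_even hp hq hp2 ((Nat.even_add.mp heven).mp hp2))
    · have hq2 : Odd (padicValNat 2 q) := by grind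
      have even_val_double {n : ℕ} (hn : n ≠ 0) (hn2 : Odd (padicValNat 2 n)) :
          Even (padicValNat 2 (2 * n)) := by
        rw [padicValNat.mul two_ne_zero hn, padicValNat_self]
        exact odd_one.add_odd hn2
      have double : (p : ℝ) / q = (2 * p : ℕ) / (2 * q : ℕ) := by
        push_cast
        rw [mul_div_mul_left _ _ two_ne_zero]
      rw [double, hasExactOverlap_div_iff_not_injective (by lia) (by lia) (by lia)]
      exact not_injective_pairSum_of_even (by lia) (by lia) (even_val_double hp hp2)
        (even_val_double hq hq2)

lemma odd_padicValNat_add_iff_of_coprime {p q : ℕ} (hco : p.Coprime q) :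
    Odd (padicValNat 2 p + padicValNat 2 q) ↔
      Odd (padicValNat 2 p) ∨ Odd (padicValNat 2 q) := by
  have one_odd : ¬ 2 ∣ p ∨ ¬ 2 ∣ q := by
    by_contra! h
    exact Nat.not_coprime_of_dvd_of_dvd one_lt_two h.1 h.2 hco
  rcases one_odd with h | h <;> simp [padicValNat.eq_zero_of_not_dvd h]

theorem no_overlap_iff_divisible_general {p q : ℕ} (hp : p ≠ 0) (hq : q ≠ 0) (hpq : p ≠ q)
    (hco : p.Coprime q) :
    ¬ HasExactOverlap ((p : ℝ) / q) ↔
      ∃ l : ℕ, 0 < l ∧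
        ((1 + X ^ (2 ^ (2 * l - 1)) : ℤ[X]) ∣
          1 + X ^ (3 * p) + X ^ (3 * q) + X ^ (3 * p + 3 * q)) := by
  rw [hasExactOverlap_div_iff_even_padicValNat_add hp hq hpq, Nat.not_even_iff_odd,
    odd_padicValNat_add_iff_of_coprime hco, exists_one_add_X_pow_dvd_iff hp hq]

theorem no_overlap_iff_divisible (p q : ℕ) (hp : 0 < p) (hpq : p < q)
    (hco : Nat.Coprime p q) :
    ¬ HasExactOverlap ((p : ℝ) / q) ↔
      ∃ l : ℕ, 0 < l ∧
        ((1 + X ^ (2 ^ (2 * l - 1)) : Polynomial ℤ) ∣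
          (1 + X ^ (3 * p) + X ^ (3 * q) + X ^ (3 * p + 3 * q))) := by
  exact no_overlap_iff_divisible_general hp.ne' (hp.trans hpq).ne' hpq.ne hco
end

section
/- The limit as N → ∞ of (1/N)·∑_{n=1}^{N} φ(2n-1)/(2n-1) exists and equals 8/π², where φ denotes Euler's totient function. -/
open Filter Topology

/-!
Write `φ(m)/m = ∑_{d ∣ m} μ(d)/d` and exchange the order of summation: the average of `φ(m)/m` over
the first `N` terms `m = qn + a` is `∑_d (μ(d)/d) · C_d(N)/N`, where `C_d(N)` counts the terms
divisible by `d`. When `a` is coprime to `q`, no term is divisible by a `d` sharing a factor with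
`q`, while otherwise `d ∣ qn + a` is a single congruence on `n` modulo `d`, so `C_d(N)/N → 1/d`.
Since `C_d(N) = O(N/d)` uniformly in `d`, dominated convergence gives the limit
`∑_{(d, q) = 1} μ(d)/d² = 1/L(2, χ₀)`, with `χ₀` the trivial character modulo `q`, and removing the
Euler factors at the primes dividing `q` from `ζ(2) = π²/6` evaluates it. Odd numbers are the case
`q = 2`, `a = 1`.
-/

section CountDvd

variable {a d q : ℕ}

theorem abs_count_modEq_sub_div_le_one (hd : 0 < d) (v N : ℕ) :
    |(N.count (· ≡ v [MOD d]) : ℝ) - N / d| ≤ 1 := by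
  have floor_le : ((N / d : ℕ) : ℝ) ≤ N / d := Nat.cast_div_le
  have lt_floor_add_one : (N / d : ℝ) < (N / d : ℕ) + 1 := by
    rw [← Nat.floor_div_eq_div (K := ℝ)]
    exact Nat.lt_floor_add_one _
  rw [Nat.count_modEq_card N hd, abs_le]
  split_ifs <;> push_cast <;> constructor <;> linarith

theorem exists_dvd_mul_add_iff_modEq (hd : d ≠ 0) (hdq : d.Coprime q) (a : ℕ) :
    ∃ v, ∀ n, d ∣ q * n + a ↔ n ≡ v [MOD d] := by
  obtain ⟨v, -, hv⟩ := Nat.exists_mul_mod_eq_of_coprime ((d - 1) * a) hdq.symm hd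
  have root : q * v + a ≡ 0 [MOD d] :=
    calc q * v + a ≡ (d - 1) * a + a [MOD d] := Nat.ModEq.add_right a hv
      _ = d * a := by rw [← Nat.succ_mul, Nat.succ_eq_add_one, Nat.sub_one_add_one hd]
      _ ≡ 0 [MOD d] := (Nat.modEq_zero_iff_dvd).2 (dvd_mul_right d a)
  refine ⟨v, fun n ↦ ?_⟩
  rw [← Nat.modEq_zero_iff_dvd]
  constructor
  · intro hn
    exact ((hn.trans root.symm).add_right_cancel' a).cancel_left_of_coprime hdq
  · intro hn
    exact ((hn.mul_left q).add_right a).trans root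

theorem abs_count_dvd_mul_add_sub_div_le_one (hd : 0 < d) (hdq : d.Coprime q) (a N : ℕ) :
    |(N.count (fun n ↦ d ∣ q * n + a) : ℝ) - N / d| ≤ 1 := by
  obtain ⟨v, hv⟩ := exists_dvd_mul_add_iff_modEq hd.ne' hdq a
  simp only [hv]
  exact abs_count_modEq_sub_div_le_one hd v N

theorem not_dvd_mul_add_of_not_coprime (haq : a.Coprime q) (hdq : ¬ d.Coprime q) (n : ℕ) :
    ¬ d ∣ q * n + a := fun h ↦
  hdq (Nat.Coprime.coprime_dvd_left h (by simpa using haq))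

theorem count_dvd_mul_add_of_not_coprime (haq : a.Coprime q) (hdq : ¬ d.Coprime q) (N : ℕ) :
    N.count (fun n ↦ d ∣ q * n + a) = 0 := by
  simp [not_dvd_mul_add_of_not_coprime haq hdq]

theorem tendsto_count_dvd_mul_add_div_of_coprime (hd : 0 < d) (hdq : d.Coprime q) (a : ℕ) :
    Tendsto (fun N : ℕ ↦ (N.count (fun n ↦ d ∣ q * n + a) : ℝ) / N) atTop (𝓝 (d : ℝ)⁻¹) := by
  rw [tendsto_iff_norm_sub_tendsto_zero]
  refine squeeze_zero' (Eventually.of_forall fun _ ↦ norm_nonneg _) ?_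
    tendsto_one_div_atTop_nhds_zero_nat
  filter_upwards [eventually_gt_atTop 0] with N hN
  set c : ℝ := (N.count (fun n ↦ d ∣ q * n + a) : ℝ)
  have rescale : c / N - (d : ℝ)⁻¹ = (c - N / d) / N := by field_simp
  calc ‖c / N - (d : ℝ)⁻¹‖ = |c - N / d| / N := by
        rw [rescale, norm_div, Real.norm_natCast, Real.norm_eq_abs]
    _ ≤ 1 / N := by
        gcongr
        exact abs_count_dvd_mul_add_sub_div_le_one hd hdq a N

theorem tendsto_count_dvd_mul_add_div (ha : 0 < a) (haq : a.Coprime q) (d : ℕ) :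
    Tendsto (fun N : ℕ ↦ (N.count (fun n ↦ d ∣ q * n + a) : ℝ) / N) atTop
      (𝓝 (if d.Coprime q then (d : ℝ)⁻¹ else 0)) := by
  split_ifs with hdq
  · rcases d.eq_zero_or_pos with rfl | hd
    · simp [ha.ne']
    · exact tendsto_count_dvd_mul_add_div_of_coprime hd hdq a
  · simp [count_dvd_mul_add_of_not_coprime haq hdq]

theorem count_dvd_mul_add_div_le (ha : 0 < a) (haq : a.Coprime q) (d N : ℕ) :
    (N.count (fun n ↦ d ∣ q * n + a) : ℝ) / N ≤ (q + a + 1) / d := by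
  rcases eq_or_ne (N.count fun n ↦ d ∣ q * n + a) 0 with h_zero | h_ne
  · rw [h_zero, Nat.cast_zero, zero_div]
    positivity
  obtain ⟨n, hnN, hdn⟩ := Nat.count_ne_iff_exists.1 h_ne
  have hd : 0 < d := Nat.pos_of_dvd_of_pos hdn (by positivity)
  have hdq : d.Coprime q := by
    by_contra hdq
    exact not_dvd_mul_add_of_not_coprime haq hdq n hdn
  have d_le : d ≤ (q + a) * N :=
    calc d ≤ q * n + a := Nat.le_of_dvd (by positivity) hdn
      _ ≤ q * N + a * N := add_le_add (by gcongr) (Nat.le_mul_of_pos_right a (by lia))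
      _ = (q + a) * N := by ring
  have one_le : (1 : ℝ) ≤ (q + a) * (N / d) := by
    rw [← mul_div_assoc, one_le_div₀ (Nat.cast_pos.2 hd)]
    exact_mod_cast d_le
  have count_le := (abs_le.1 (abs_count_dvd_mul_add_sub_div_le_one hd hdq a N)).2
  refine div_le_of_le_mul₀ (by positivity) (by positivity) ?_
  rw [div_mul_eq_mul_div, mul_div_assoc]
  linarith

end CountDvd

section DivisorSums

theorem hasSum_ite_dvd_sum_divisors {E : Type*} [AddCommMonoid E] [TopologicalSpace E]
    (f : ℕ → E) {m : ℕ} (hm : m ≠ 0) :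
    HasSum (fun d ↦ if d ∣ m then f d else 0) (∑ d ∈ m.divisors, f d) := by
  rw [← Nat.filter_dvd_eq_divisors hm, Finset.sum_filter]
  refine hasSum_sum_of_ne_finset_zero fun d hd ↦ if_neg fun hdm ↦ hd ?_
  exact Finset.mem_range_succ_iff.2 (Nat.le_of_dvd (Nat.pos_of_ne_zero hm) hdm)

theorem hasSum_count_dvd_nsmul {E : Type*} [AddCommMonoid E] [TopologicalSpace E]
    [ContinuousAdd E] (f : ℕ → E) {m : ℕ → ℕ} (hm : ∀ n, m n ≠ 0) (N : ℕ) :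
    HasSum (fun d ↦ N.count (fun n ↦ d ∣ m n) • f d)
      (∑ n ∈ Finset.range N, ∑ d ∈ (m n).divisors, f d) := by
  convert! hasSum_sum fun n _ ↦ hasSum_ite_dvd_sum_divisors f (hm n) using 2 with d
  rw [← Finset.sum_filter, Finset.sum_const, Nat.count_eq_card_filter_range]

/-- Wintner's mean value theorem, along an arithmetic progression. -/
theorem tendsto_average_sum_divisors_mul_add {E : Type*} [NormedAddCommGroup E] [NormedSpace ℝ E]
    [CompleteSpace E] {f : ℕ → E} (hf : Summable fun d : ℕ ↦ ‖f d‖ / d) {a q : ℕ} (ha : 0 < a)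
    (haq : a.Coprime q) :
    Tendsto (fun N : ℕ ↦ (N : ℝ)⁻¹ • ∑ n ∈ Finset.range N, ∑ d ∈ (q * n + a).divisors, f d) atTop
      (𝓝 (∑' d : ℕ, (if d.Coprime q then (d : ℝ)⁻¹ else 0) • f d)) := by
  have average_eq_tsum (N : ℕ) :
      (N : ℝ)⁻¹ • ∑ n ∈ Finset.range N, ∑ d ∈ (q * n + a).divisors, f d =
        ∑' d, ((N.count (fun n ↦ d ∣ q * n + a) : ℝ) / N) • f d := by
    have h := (hasSum_count_dvd_nsmul f (m := fun n ↦ q * n + a) (by lia) N).const_smul (N : ℝ)⁻¹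
    rw [← h.tsum_eq]
    refine tsum_congr fun d ↦ ?_
    rw [← Nat.cast_smul_eq_nsmul ℝ, smul_smul, div_eq_inv_mul]
  simp only [average_eq_tsum]
  refine tendsto_tsum_of_dominated_convergence (hf.mul_left (q + a + 1 : ℝ))
    (fun d ↦ (tendsto_count_dvd_mul_add_div ha haq d).smul_const (f d)) ?_
  refine Eventually.of_forall fun N d ↦ ?_
  calc ‖((N.count (fun n ↦ d ∣ q * n + a) : ℝ) / N) • f d‖
      = (N.count (fun n ↦ d ∣ q * n + a) : ℝ) / N * ‖f d‖ := by
        rw [norm_smul, Real.norm_of_nonneg (by positivity)]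
    _ ≤ (q + a + 1) / d * ‖f d‖ :=
        mul_le_mul_of_nonneg_right (count_dvd_mul_add_div_le ha haq d N) (norm_nonneg _)
    _ = (q + a + 1) * (‖f d‖ / d) := by ring

end DivisorSums

section Moebius

open ArithmeticFunction
open scoped ArithmeticFunction.Moebius LSeries.notation

theorem totient_div_eq_sum_moebius_div (m : ℕ) :
    (m.totient : ℝ) / m = ∑ d ∈ m.divisors, (μ d : ℝ) / d := by
  rcases m.eq_zero_or_pos with rfl | hm
  · simp
  have inversion : ∑ x ∈ m.divisorsAntidiagonal, (μ x.1 : ℝ) * x.2 = m.totient :=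
    sum_eq_iff_sum_mul_moebius_eq (f := fun n ↦ (n.totient : ℝ)) (g := fun n ↦ (n : ℝ)) |>.1
      (fun n _ ↦ mod_cast Nat.sum_totient n) m hm
  rw [← inversion, Finset.sum_div,
    Nat.sum_divisorsAntidiagonal (f := fun d e ↦ (μ d : ℝ) * e / m)]
  refine Finset.sum_congr rfl fun d hd ↦ ?_
  have hd0 : (d : ℝ) ≠ 0 := Nat.cast_ne_zero.2 (Nat.pos_of_mem_divisors hd).ne'
  rw [Nat.cast_div (Nat.dvd_of_mem_divisors hd) hd0]
  field_simp

theorem summable_norm_moebius_div_div :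
    Summable fun d : ℕ ↦ ‖(μ d : ℝ) / d‖ / d := by
  refine .of_nonneg_of_le (fun d ↦ by positivity) (fun d ↦ ?_)
    (Real.summable_one_div_nat_pow.2 one_lt_two)
  have abs_moebius_le : |(μ d : ℝ)| ≤ 1 := mod_cast abs_moebius_le_one
  rw [norm_div, Real.norm_natCast, div_div, ← sq, Real.norm_eq_abs]
  gcongr

theorem LSeries_trivChar_mul_moebius (q : ℕ) [NeZero q] {s : ℂ} (hs : 1 < s.re) :
    LSeries (↗(1 : DirichletCharacter ℂ q) * ↗μ) s =
      ((∏ p ∈ q.primeFactors, (1 - (p : ℂ) ^ (-s))) * riemannZeta s)⁻¹ := by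
  have hs1 : s ≠ 1 := by
    rintro rfl
    simp at hs
  rw [← DirichletCharacter.LFunctionTrivChar_eq_mul_riemannZeta hs1,
    DirichletCharacter.LFunctionTrivChar, DirichletCharacter.LFunction_eq_LSeries _ hs]
  exact eq_inv_of_mul_eq_one_right (DirichletCharacter.LSeries.mul_mu_eq_one _ hs)

theorem trivChar_natCast {R : Type*} [CommMonoidWithZero R] (q n : ℕ) :
    (1 : DirichletCharacter R q) n = if n.Coprime q then 1 else 0 := by
  split_ifs with hnq
  · exact MulChar.one_apply ((ZMod.isUnit_iff_coprime n q).2 hnq)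
  · exact MulChar.map_nonunit _ fun h ↦ hnq ((ZMod.isUnit_iff_coprime n q).1 h)

theorem ofReal_tsum_coprime_moebius_div_sq_eq_LSeries (q : ℕ) :
    ((∑' d : ℕ, (if d.Coprime q then (μ d : ℝ) / d ^ 2 else 0) : ℝ) : ℂ) =
      LSeries (↗(1 : DirichletCharacter ℂ q) * ↗μ) 2 := by
  rw [LSeries, Complex.ofReal_tsum]
  refine tsum_congr fun d ↦ ?_
  rcases eq_or_ne d 0 with rfl | hd
  · simp
  rw [LSeries.term_of_ne_zero hd, Pi.mul_apply, trivChar_natCast]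
  split_ifs <;> simp

theorem tsum_coprime_moebius_div_sq (q : ℕ) [NeZero q] :
    ∑' d : ℕ, (if d.Coprime q then (μ d : ℝ) / d ^ 2 else 0) =
      6 / Real.pi ^ 2 * ∏ p ∈ q.primeFactors, (1 - 1 / (p : ℝ) ^ 2)⁻¹ := by
  apply Complex.ofReal_injective
  rw [ofReal_tsum_coprime_moebius_div_sq_eq_LSeries,
    LSeries_trivChar_mul_moebius q (by norm_num),
    riemannZeta_two, mul_comm, mul_inv, inv_div, ← Finset.prod_inv_distrib]
  push_cast
  simp only [Complex.cpow_neg, Complex.cpow_ofNat, one_div]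

theorem totient_odd_average_general {a q : ℕ} [NeZero q] (ha : 0 < a) (haq : a.Coprime q) :
    Tendsto (fun N : ℕ ↦ (1 / (N : ℝ)) *
        ∑ n ∈ Finset.range N, ((q * n + a).totient : ℝ) / (q * n + a : ℕ))
      atTop (𝓝 (6 / Real.pi ^ 2 * ∏ p ∈ q.primeFactors, (1 - 1 / (p : ℝ) ^ 2)⁻¹)) := by
  have mean_value := tendsto_average_sum_divisors_mul_add summable_norm_moebius_div_div ha haq
  simp only [← totient_div_eq_sum_moebius_div, smul_eq_mul, ← one_div] at mean_value
  rw [← tsum_coprime_moebius_div_sq]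
  convert! mean_value using 4 with d
  rw [ite_mul, zero_mul, div_mul_div_comm, one_mul, sq]

end Moebius

theorem sum_Icc_one_totient_two_mul_sub_one_div (N : ℕ) :
    ∑ n ∈ Finset.Icc 1 N, (Nat.totient (2 * n - 1) : ℝ) / (2 * n - 1) =
      ∑ n ∈ Finset.range N, (Nat.totient (2 * n + 1) : ℝ) / (2 * n + 1 : ℕ) := by
  rw [← Finset.Ico_add_one_right_eq_Icc, Finset.sum_Ico_eq_sum_range, Nat.add_sub_cancel]
  refine Finset.sum_congr rfl fun n _ ↦ ?_
  rw [show 2 * (1 + n) - 1 = 2 * n + 1 by lia]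
  push_cast
  ring

theorem totient_odd_average :
    Tendsto (fun N : ℕ =>
        (1 / (N : ℝ)) *
          ∑ n ∈ Finset.Icc 1 N, (Nat.totient (2*n-1) : ℝ) / (2*n-1))
      atTop (𝓝 (8 / Real.pi^2)) := by
  have local_factor_two : 6 / Real.pi ^ 2 * ∏ p ∈ Nat.primeFactors 2, (1 - 1 / (p : ℝ) ^ 2)⁻¹ =
      8 / Real.pi ^ 2 := by
    rw [Nat.prime_two.primeFactors, Finset.prod_singleton]
    ring
  simpa only [sum_Icc_one_totient_two_mul_sub_one_div, local_factor_two] using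
    totient_odd_average_general one_pos (Nat.coprime_one_left 2)
end
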